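/- arXiv:0708.3822 — 5 statements merged into one kernel-verified Lean document; each statement's English description precedes it below -/
import Mathlib

section
/- Every symplectic matrix admits a symplectic singular value decomposition: for every S ∈ Sp(2N,ℝ) there exist matrices U and V that are both symplectic and orthogonal (U, V ∈ Sp(2N,ℝ) ∩ O(2N)) and a function d : Fin N → ℝ with d(i) > 0 for all i, such that S = U · D · V, where D is the 2N×2N diagonal matrix whose first N diagonal entries are d(1), …, d(N) and whose last N diagonal entries are d(1)⁻¹, …, d(N)⁻¹. -/
open Matrix

/-- `J` denotes the 2N×2N real matrix with block form [[0, I_N], [−I_N, 0]]. -/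
noncomputable def J (N : ℕ) : Matrix (Fin N ⊕ Fin N) (Fin N ⊕ Fin N) ℝ :=
  Matrix.fromBlocks 0 1 (-1) 0

/-!
Put `P = Sᴴ S`, which is positive definite and again symplectic, and let `ω` be the symplectic
form with matrix `J`. If `P v = μ v`, then `P` preserves the `ω`-orthogonal complement of `v`,
because `ω (v, P x) = μ⁻¹ ω (P v, P x) = μ⁻¹ ω (v, x)`. Eigenvectors of `P` can therefore be split
off one at a time inside the simultaneous Hermitian and symplectic complement of the previous ones,
and this can be continued up to half the dimension. If `X` has the resulting Lagrangian frame as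
columns, then `W = [X | J X̄]` is unitary and symplectic, and `P W = W diag(μ, μ⁻¹)`. With `d = √μ`
and `D = diag(d, d⁻¹)`, the factorization is `S = (S W D⁻¹) D Wᴴ`.
-/

section Eigenframe

variable {𝕜 E ι : Type*} [RCLike 𝕜] [NormedAddCommGroup E] [InnerProductSpace 𝕜 E]

/-- An orthonormal family `e` of eigenvectors of `T`, with real eigenvalues `μ`, whose span is
isotropic for the bilinear form `ω`. -/
structure IsIsotropicEigenframe (T : E →ₗ[𝕜] E) (ω : LinearMap.BilinForm 𝕜 E) (e : ι → E)
    (μ : ι → ℝ) : Prop where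
  orthonormal : Orthonormal 𝕜 e
  isotropic : ∀ i j, ω (e i) (e j) = 0
  apply_eq_smul : ∀ i, T (e i) = (μ i : 𝕜) • e i

/-- The vectors orthogonal to the family `e` both for the inner product and for `ω`, encoded as the
kernel of a map into `ι ⊕ ι → 𝕜` so that its dimension can be bounded below. -/
noncomputable def isotropicComplement (ω : LinearMap.BilinForm 𝕜 E) (e : ι → E) :
    Submodule 𝕜 E :=
  LinearMap.ker (LinearMap.pi (Sum.elim (fun i => innerₛₗ 𝕜 (e i)) fun i => ω (e i)))

lemma mem_isotropicComplement {ω : LinearMap.BilinForm 𝕜 E} {e : ι → E} {x : E} :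
    x ∈ isotropicComplement ω e ↔ (∀ i, inner 𝕜 (e i) x = 0) ∧ ∀ i, ω (e i) x = 0 := by
  simp [isotropicComplement, funext_iff]

lemma isotropicComplement_ne_bot [Fintype ι] [FiniteDimensional 𝕜 E]
    (ω : LinearMap.BilinForm 𝕜 E) (e : ι → E) (h : 2 * Fintype.card ι < Module.finrank 𝕜 E) :
    isotropicComplement ω e ≠ ⊥ := by
  apply LinearMap.ker_ne_bot_of_finrank_lt
  rwa [Module.finrank_fintype_fun_eq_card, Fintype.card_sum, ← two_mul]

lemma exists_unit_eigenvector_mem_of_isSymmetric {T : E →ₗ[𝕜] E} (hT : T.IsSymmetric)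
    {F : Submodule 𝕜 E} [FiniteDimensional 𝕜 F] (hF : F ≠ ⊥) (hTF : ∀ x ∈ F, T x ∈ F) :
    ∃ v ∈ F, ‖v‖ = 1 ∧ ∃ c : ℝ, T v = (c : 𝕜) • v := by
  have : Nontrivial F := Submodule.nontrivial_iff_ne_bot.mpr hF
  have hsymm := hT.restrict_invariant hTF
  let i : Fin (Module.finrank 𝕜 F) := ⟨0, Module.finrank_pos⟩
  let v := hsymm.eigenvectorBasis rfl i
  exact ⟨v, v.2, (hsymm.eigenvectorBasis rfl).norm_eq_one i, hsymm.eigenvalues rfl i,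
    congrArg Subtype.val (hsymm.apply_eigenvectorBasis rfl i)⟩

namespace IsIsotropicEigenframe

variable {T : E →ₗ[𝕜] E} {ω : LinearMap.BilinForm 𝕜 E} {e : ι → E} {μ : ι → ℝ}

lemma eigenvalue_ne_zero (h : IsIsotropicEigenframe T ω e μ) (hT : Function.Injective T) (i : ι) :
    (μ i : 𝕜) ≠ 0 := by
  intro hμ
  have hTe : T (e i) = 0 := by rw [h.apply_eq_smul, hμ, zero_smul]
  exact h.orthonormal.ne_zero i ((map_eq_zero_iff T hT).mp hTe)

lemma apply_mem_isotropicComplement (h : IsIsotropicEigenframe T ω e μ) (hT : T.IsSymmetric)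
    (hinj : Function.Injective T) (hTω : ∀ x y, ω (T x) (T y) = ω x y) {x : E}
    (hx : x ∈ isotropicComplement ω e) : T x ∈ isotropicComplement ω e := by
  rw [mem_isotropicComplement] at hx ⊢
  refine ⟨fun i => ?_, fun i => ?_⟩
  · rw [← hT, h.apply_eq_smul, inner_smul_left, hx.1 i, mul_zero]
  · have hμω : (μ i : 𝕜) * ω (e i) (T x) = 0 := by
      rw [← smul_eq_mul, ← LinearMap.smul_apply, ← map_smul, ← h.apply_eq_smul, hTω, hx.2 i]
    exact (mul_eq_zero.mp hμω).resolve_left (h.eigenvalue_ne_zero hinj i)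

lemma comp (h : IsIsotropicEigenframe T ω e μ) {ι' : Type*} {f : ι' → ι}
    (hf : Function.Injective f) : IsIsotropicEigenframe T ω (e ∘ f) (μ ∘ f) where
  orthonormal := h.orthonormal.comp f hf
  isotropic i j := h.isotropic (f i) (f j)
  apply_eq_smul i := h.apply_eq_smul (f i)

lemma vecCons {k : ℕ} {e : Fin k → E} {μ : Fin k → ℝ} (h : IsIsotropicEigenframe T ω e μ)
    (hω : ω.IsAlt) {v : E} (hv : v ∈ isotropicComplement ω e) (hv_norm : ‖v‖ = 1) {c : ℝ}
    (hTv : T v = (c : 𝕜) • v) : IsIsotropicEigenframe T ω (vecCons v e) (vecCons c μ) := by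
  rw [mem_isotropicComplement] at hv
  refine ⟨orthonormal_vecCons_iff.mpr ⟨hv_norm, fun i => ?_, h.orthonormal⟩, ?_, ?_⟩
  · exact inner_eq_zero_symm.mp (hv.1 i)
  · simpa [Fin.forall_fin_succ, hω.self_eq_zero v, hv.2, h.isotropic] using
      fun i => hω.isRefl _ _ (hv.2 i)
  · simpa [Fin.forall_fin_succ, hTv] using h.apply_eq_smul

end IsIsotropicEigenframe

lemma exists_isIsotropicEigenframe [FiniteDimensional 𝕜 E] {T : E →ₗ[𝕜] E} (hT : T.IsSymmetric)
    (hinj : Function.Injective T) {ω : LinearMap.BilinForm 𝕜 E} (hω : ω.IsAlt)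
    (hTω : ∀ x y, ω (T x) (T y) = ω x y) {k : ℕ} (hk : 2 * k ≤ Module.finrank 𝕜 E) :
    ∃ (e : Fin k → E) (μ : Fin k → ℝ), IsIsotropicEigenframe T ω e μ := by
  induction k with
  | zero => exact ⟨![], ![], by simp, finZeroElim, finZeroElim⟩
  | succ k ih =>
    obtain ⟨e, μ, h⟩ := ih (by omega)
    have hne : isotropicComplement ω e ≠ ⊥ := isotropicComplement_ne_bot ω e (by simp; omega)
    obtain ⟨v, hv, hv_norm, c, hTv⟩ := exists_unit_eigenvector_mem_of_isSymmetric hT hne fun _ =>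
      h.apply_mem_isotropicComplement hT hinj hTω
    exact ⟨vecCons v e, vecCons c μ, h.vecCons hω hv hv_norm hTv⟩

end Eigenframe

section SymplecticGroup

variable {l R : Type*} [DecidableEq l] [CommRing R]

lemma conjTranspose_J [StarRing R] : (Matrix.J l R)ᴴ = -Matrix.J l R := by
  simp [Matrix.J, fromBlocks_conjTranspose, fromBlocks_neg]

variable [Fintype l] {A : Matrix (l ⊕ l) (l ⊕ l) R}

lemma conjTranspose_mem_symplecticGroup [StarRing R] (hA : A ∈ symplecticGroup l R) :
    Aᴴ ∈ symplecticGroup l R :=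
  SymplecticGroup.map_mem (SymplecticGroup.transpose_mem hA) (starRingEnd R)

lemma mulVec_injective_of_mem_symplecticGroup (hA : A ∈ symplecticGroup l R) :
    Function.Injective A.mulVec :=
  mulVec_injective_of_isUnit ((isUnit_iff_isUnit_det A).mpr (SymplecticGroup.symplectic_det hA))

end SymplecticGroup

section LagrangianFrame

variable {l R : Type*} [Fintype l] [DecidableEq l] [CommRing R] [StarRing R]

/-- The columns of `X` are orthonormal and span a subspace which is isotropic, hence Lagrangian, for
the symplectic form with matrix `Matrix.J l R`. -/
structure IsLagrangianFrame (X : Matrix (l ⊕ l) l R) : Prop where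
  conjTranspose_mul_self : Xᴴ * X = 1
  transpose_mul_J_mul_self : Xᵀ * Matrix.J l R * X = 0

/-- The square matrix `[X | J X̄]`, which completes a Lagrangian frame `X` to a unitary symplectic
matrix; the complex conjugate `X̄` is written `Xᴴᵀ`. -/
def lagrangianExtension (X : Matrix (l ⊕ l) l R) : Matrix (l ⊕ l) (l ⊕ l) R :=
  fromCols X (Matrix.J l R * Xᴴᵀ)

namespace IsLagrangianFrame

variable {X : Matrix (l ⊕ l) l R}

lemma transpose_mul_conjTranspose_transpose (hX : IsLagrangianFrame X) : Xᵀ * Xᴴᵀ = 1 := by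
  rw [← transpose_mul, hX.conjTranspose_mul_self, transpose_one]

lemma conjTranspose_mul_J_mul (hX : IsLagrangianFrame X) : Xᴴ * Matrix.J l R * Xᴴᵀ = 0 := by
  calc
    Xᴴ * Matrix.J l R * Xᴴᵀ = (Xᵀ * Matrix.J l R * X).map (starRingEnd R) := by
      rw [Matrix.map_mul, Matrix.map_mul, map_J]
      rfl
    _ = 0 := by rw [hX.transpose_mul_J_mul_self, Matrix.map_zero _ (map_zero _)]

lemma lagrangianExtension_mem_unitaryGroup (hX : IsLagrangianFrame X) :
    lagrangianExtension X ∈ unitaryGroup (l ⊕ l) R := by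
  have hX_conj : Xᴴᵀᴴ = Xᵀ := by ext; simp
  have hXJJX : Xᵀ * -Matrix.J l R * (Matrix.J l R * Xᴴᵀ) = 1 := by
    rw [Matrix.mul_assoc, ← Matrix.mul_assoc (-Matrix.J l R), Matrix.neg_mul, J_squared, neg_neg,
      Matrix.one_mul, hX.transpose_mul_conjTranspose_transpose]
  have hXJX : Xᵀ * -Matrix.J l R * X = 0 := by
    rw [Matrix.mul_neg, Matrix.neg_mul, hX.transpose_mul_J_mul_self, neg_zero]
  rw [mem_unitaryGroup_iff', star_eq_conjTranspose, lagrangianExtension,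
    conjTranspose_fromCols_eq_fromRows_conjTranspose, fromRows_mul_fromCols, conjTranspose_mul,
    conjTranspose_J, hX_conj, hX.conjTranspose_mul_self, hXJJX, hXJX, ← Matrix.mul_assoc Xᴴ,
    hX.conjTranspose_mul_J_mul, fromBlocks_one]

lemma lagrangianExtension_mem_symplecticGroup (hX : IsLagrangianFrame X) :
    lagrangianExtension X ∈ symplecticGroup l R := by
  have hJX : (Matrix.J l R * Xᴴᵀ)ᵀ * Matrix.J l R = Xᴴ := by
    rw [transpose_mul, transpose_transpose, J_transpose, Matrix.mul_assoc, Matrix.neg_mul,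
      J_squared, neg_neg, Matrix.mul_one]
  have hXJJX : Xᵀ * Matrix.J l R * (Matrix.J l R * Xᴴᵀ) = -1 := by
    rw [Matrix.mul_assoc, ← Matrix.mul_assoc (Matrix.J l R), J_squared, Matrix.neg_mul,
      Matrix.one_mul, Matrix.mul_neg, hX.transpose_mul_conjTranspose_transpose]
  rw [SymplecticGroup.mem_iff', lagrangianExtension, transpose_fromCols, fromRows_mul,
    fromRows_mul_fromCols, hJX, hX.transpose_mul_J_mul_self, hXJJX, hX.conjTranspose_mul_self,
    ← Matrix.mul_assoc, hX.conjTranspose_mul_J_mul, Matrix.J]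

end IsLagrangianFrame

end LagrangianFrame

section SymplecticDiagonal

variable {l K : Type*} [DecidableEq l] [Field K]

/-- The diagonal matrix `diag(d, d⁻¹)`, the middle factor of a symplectic singular value
decomposition; since `0⁻¹ = 0`, it is symplectic only if no `d i` vanishes. -/
def symplecticDiagonal (d : l → K) : Matrix (l ⊕ l) (l ⊕ l) K :=
  diagonal (Sum.elim d d⁻¹)

lemma symplecticDiagonal_one : symplecticDiagonal (1 : l → K) = 1 := by
  simp [symplecticDiagonal]

lemma symplecticDiagonal_mul [Fintype l] (a b : l → K) :
    symplecticDiagonal a * symplecticDiagonal b = symplecticDiagonal (a * b) := by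
  rw [symplecticDiagonal, symplecticDiagonal, diagonal_mul_diagonal, symplecticDiagonal, mul_inv]
  congr 1
  ext (i | i) <;> rfl

lemma conjTranspose_symplecticDiagonal [StarRing K] (d : l → K) :
    (symplecticDiagonal d)ᴴ = symplecticDiagonal (star d) := by
  rw [symplecticDiagonal, diagonal_conjTranspose, symplecticDiagonal]
  congr 1
  ext (i | i) <;> simp

lemma symplecticDiagonal_mem_symplecticGroup [Fintype l] {d : l → K} (hd : ∀ i, d i ≠ 0) :
    symplecticDiagonal d ∈ symplecticGroup l K := by
  rw [symplecticDiagonal, ← fromBlocks_diagonal, SymplecticGroup.fromBlocks_mem_iff]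
  simp [diagonal_mul_diagonal, hd]

lemma symplecticDiagonal_inv_mul_self [Fintype l] {d : l → K} (hd : ∀ i, d i ≠ 0) :
    symplecticDiagonal d⁻¹ * symplecticDiagonal d = 1 := by
  have hd_inv : d⁻¹ * d = 1 := funext fun i => inv_mul_cancel₀ (hd i)
  rw [symplecticDiagonal_mul, hd_inv, symplecticDiagonal_one]

lemma mul_mul_symplecticDiagonal_inv_mem_unitaryGroup [Fintype l] [StarRing K]
    {S W : Matrix (l ⊕ l) (l ⊕ l) K} (hW : W ∈ unitaryGroup (l ⊕ l) K) {d : l → K}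
    (hd : ∀ i, d i ≠ 0) (hd_star : star d = d)
    (hSW : Sᴴ * S * W = W * symplecticDiagonal (d * d)) :
    S * W * symplecticDiagonal d⁻¹ ∈ unitaryGroup (l ⊕ l) K := by
  have hd_inv_star : star d⁻¹ = d⁻¹ :=
    funext fun i => (star_inv₀ (d i)).trans (congrArg (·⁻¹) (congrFun hd_star i))
  have hD_star : (symplecticDiagonal d⁻¹)ᴴ = symplecticDiagonal d⁻¹ := by
    rw [conjTranspose_symplecticDiagonal, hd_inv_star]
  have hWW : Wᴴ * W = 1 := mem_unitaryGroup_iff'.mp hW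
  have hd_cancel : d⁻¹ * (d * d) * d⁻¹ = 1 := funext fun i => by simp [hd i]
  rw [mem_unitaryGroup_iff', star_eq_conjTranspose]
  calc
    (S * W * symplecticDiagonal d⁻¹)ᴴ * (S * W * symplecticDiagonal d⁻¹) =
        symplecticDiagonal d⁻¹ * (Wᴴ * (Sᴴ * S * W)) * symplecticDiagonal d⁻¹ := by
      simp only [conjTranspose_mul, hD_star, Matrix.mul_assoc]
    _ = symplecticDiagonal d⁻¹ * symplecticDiagonal (d * d) * symplecticDiagonal d⁻¹ := by
      rw [hSW, ← Matrix.mul_assoc Wᴴ, hWW, Matrix.one_mul]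
    _ = 1 := by rw [symplecticDiagonal_mul, symplecticDiagonal_mul, hd_cancel,
        symplecticDiagonal_one]

lemma mul_lagrangianExtension [Fintype l] [StarRing K] {P : Matrix (l ⊕ l) (l ⊕ l) K}
    (hP : P.IsHermitian) (hPs : P ∈ symplecticGroup l K) {X : Matrix (l ⊕ l) l K} {μ : l → K}
    (hμ : ∀ i, μ i ≠ 0) (hμ_star : star μ = μ) (hPX : P * X = X * diagonal μ) :
    P * lagrangianExtension X = lagrangianExtension X * symplecticDiagonal μ := by
  have hPX_conj : Pᵀ * Xᴴᵀ = Xᴴᵀ * diagonal μ := by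
    rw [← transpose_mul, ← hP.eq, ← conjTranspose_mul, hPX, conjTranspose_mul,
      diagonal_conjTranspose, hμ_star, transpose_mul, diagonal_transpose]
  have hPJX : P * (Matrix.J l K * Xᴴᵀ) = Matrix.J l K * Xᴴᵀ * diagonal μ⁻¹ :=
    calc
      P * (Matrix.J l K * Xᴴᵀ) = P * Matrix.J l K * (Xᴴᵀ * diagonal μ) * diagonal μ⁻¹ := by
        simp [Matrix.mul_assoc, diagonal_mul_diagonal, hμ]
      _ = P * Matrix.J l K * Pᵀ * Xᴴᵀ * diagonal μ⁻¹ := by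
        rw [← hPX_conj, ← Matrix.mul_assoc (P * Matrix.J l K)]
      _ = Matrix.J l K * Xᴴᵀ * diagonal μ⁻¹ := by rw [SymplecticGroup.mem_iff.mp hPs]
  rw [lagrangianExtension, symplecticDiagonal, mul_fromCols, ← fromBlocks_diagonal,
    fromCols_mul_fromBlocks, hPX, hPJX]
  simp only [Matrix.mul_zero, add_zero, zero_add]

end SymplecticDiagonal

section Symplectic

open scoped ComplexOrder

variable {l 𝕜 : Type*} [Fintype l] [DecidableEq l] [RCLike 𝕜]

/-- The standard symplectic form on Euclidean space, with matrix `Matrix.J l 𝕜`; it is bilinear, not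
sesquilinear, also over `ℂ`. -/
noncomputable def euclideanSymplecticForm (l 𝕜 : Type*) [Fintype l] [DecidableEq l] [RCLike 𝕜] :
    LinearMap.BilinForm 𝕜 (EuclideanSpace 𝕜 (l ⊕ l)) :=
  (Matrix.J l 𝕜).toBilin'.comp (WithLp.linearEquiv 2 𝕜 _).toLinearMap
    (WithLp.linearEquiv 2 𝕜 _).toLinearMap

lemma euclideanSymplecticForm_apply (x y : EuclideanSpace 𝕜 (l ⊕ l)) :
    euclideanSymplecticForm l 𝕜 x y = x.ofLp ⬝ᵥ Matrix.J l 𝕜 *ᵥ y.ofLp :=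
  toBilin'_apply' _ _ _

lemma isAlt_euclideanSymplecticForm : (euclideanSymplecticForm l 𝕜).IsAlt := by
  intro x
  have h : x.ofLp ⬝ᵥ Matrix.J l 𝕜 *ᵥ x.ofLp = -(x.ofLp ⬝ᵥ Matrix.J l 𝕜 *ᵥ x.ofLp) := by
    nth_rw 1 [dotProduct_mulVec, ← mulVec_transpose, J_transpose, neg_mulVec, neg_dotProduct,
      dotProduct_comm]
  rw [euclideanSymplecticForm_apply]
  exact self_eq_neg.mp h

lemma euclideanSymplecticForm_toEuclideanLin {A : Matrix (l ⊕ l) (l ⊕ l) 𝕜}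
    (hA : A ∈ symplecticGroup l 𝕜) (x y : EuclideanSpace 𝕜 (l ⊕ l)) :
    euclideanSymplecticForm l 𝕜 (A.toEuclideanLin x) (A.toEuclideanLin y) =
      euclideanSymplecticForm l 𝕜 x y := by
  simp only [euclideanSymplecticForm_apply, ofLp_toLpLin, toLin'_apply]
  nth_rw 2 [← SymplecticGroup.mem_iff'.mp hA]
  rw [← mulVec_mulVec, ← mulVec_mulVec, dotProduct_mulVec x.ofLp, vecMul_transpose]

lemma IsIsotropicEigenframe.isLagrangianFrame {T} {e : l → EuclideanSpace 𝕜 (l ⊕ l)}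
    {μ : l → ℝ} (h : IsIsotropicEigenframe T (euclideanSymplecticForm l 𝕜) e μ) :
    IsLagrangianFrame (of fun a i => e i a) where
  conjTranspose_mul_self := by
    rw [← gram_eq_one_iff_orthonormal.mpr h.orthonormal,
      gram_eq_conjTranspose_mul (EuclideanSpace.basisFun _ 𝕜)]
    rfl
  transpose_mul_J_mul_self := by
    ext i j
    rw [Matrix.mul_assoc]
    exact (euclideanSymplecticForm_apply _ _).symm.trans (h.isotropic i j)

lemma IsIsotropicEigenframe.mul_eq_mul_diagonal {n ι : Type*} [Fintype n] [DecidableEq n]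
    [Fintype ι] [DecidableEq ι] {P : Matrix n n 𝕜} {ω} {e : ι → EuclideanSpace 𝕜 n} {μ : ι → ℝ}
    (h : IsIsotropicEigenframe P.toEuclideanLin ω e μ) :
    P * of (fun a i => e i a) = of (fun a i => e i a) * diagonal (fun i => (μ i : 𝕜)) := by
  ext a i
  rw [mul_diagonal, mul_comm]
  exact congrArg (fun v => v.ofLp a) (h.apply_eq_smul i)

lemma eigenvalue_pos_of_posDef {m n : Type*} [Fintype m] [Fintype n] [DecidableEq n]
    {P : Matrix m m 𝕜} (hP : P.PosDef) {X : Matrix m n 𝕜} (hX : Xᴴ * X = 1) {μ : n → 𝕜}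
    (hPX : P * X = X * diagonal μ) (i : n) : 0 < μ i := by
  have hX_inj : Function.Injective X.mulVec :=
    Function.LeftInverse.injective (g := Xᴴ.mulVec) fun v => by
      rw [mulVec_mulVec, hX, one_mulVec]
  have hdiag : Xᴴ * P * X = diagonal μ := by
    rw [Matrix.mul_assoc, hPX, ← Matrix.mul_assoc, hX, Matrix.one_mul]
  exact posDef_diagonal_iff.mp (hdiag ▸ hP.conjTranspose_mul_mul_same hX_inj) i

lemma exists_isLagrangianFrame_mul_eq_mul_diagonal {P : Matrix (l ⊕ l) (l ⊕ l) 𝕜}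
    (hP : P.IsHermitian) (hPs : P ∈ symplecticGroup l 𝕜) :
    ∃ (X : Matrix (l ⊕ l) l 𝕜) (μ : l → ℝ), IsLagrangianFrame X ∧
      P * X = X * diagonal (fun i => (μ i : 𝕜)) := by
  have hP_inj : Function.Injective P.toEuclideanLin := fun x y hxy =>
    WithLp.ofLp_injective 2 <|
      mulVec_injective_of_mem_symplecticGroup hPs (congrArg WithLp.ofLp hxy)
  have hcard : 2 * Fintype.card l ≤ Module.finrank 𝕜 (EuclideanSpace 𝕜 (l ⊕ l)) := by
    rw [finrank_euclideanSpace, Fintype.card_sum, two_mul]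
  obtain ⟨e, μ, h⟩ := exists_isIsotropicEigenframe (isSymmetric_toEuclideanLin_iff.mpr hP) hP_inj
    isAlt_euclideanSymplecticForm (euclideanSymplecticForm_toEuclideanLin hPs) hcard
  have h_reindexed := h.comp (Fintype.equivFin l).injective
  exact ⟨_, _, h_reindexed.isLagrangianFrame, h_reindexed.mul_eq_mul_diagonal⟩

theorem exists_symplectic_unitary_diagonalization {P : Matrix (l ⊕ l) (l ⊕ l) 𝕜} (hP : P.PosDef)
    (hPs : P ∈ symplecticGroup l 𝕜) :
    ∃ W ∈ symplecticGroup l 𝕜 ⊓ unitaryGroup (l ⊕ l) 𝕜, ∃ μ : l → ℝ, (∀ i, 0 < μ i) ∧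
      P * W = W * symplecticDiagonal (fun i => (μ i : 𝕜)) := by
  obtain ⟨X, μ, hX, hPX⟩ := exists_isLagrangianFrame_mul_eq_mul_diagonal hP.isHermitian hPs
  have hμ (i : l) : 0 < μ i :=
    RCLike.ofReal_pos.mp (eigenvalue_pos_of_posDef hP hX.conjTranspose_mul_self hPX i)
  exact ⟨lagrangianExtension X, ⟨hX.lagrangianExtension_mem_symplecticGroup,
    hX.lagrangianExtension_mem_unitaryGroup⟩, μ, hμ, mul_lagrangianExtension hP.isHermitian hPs
      (fun i => RCLike.ofReal_ne_zero.mpr (hμ i).ne') (funext fun _ => RCLike.conj_ofReal _) hPX⟩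

theorem stmt_1_general {S : Matrix (l ⊕ l) (l ⊕ l) 𝕜} (hS : S ∈ symplecticGroup l 𝕜) :
    ∃ U ∈ symplecticGroup l 𝕜 ⊓ unitaryGroup (l ⊕ l) 𝕜,
      ∃ V ∈ symplecticGroup l 𝕜 ⊓ unitaryGroup (l ⊕ l) 𝕜, ∃ d : l → ℝ,
        (∀ i, 0 < d i) ∧ S = U * symplecticDiagonal (fun i => (d i : 𝕜)) * V := by
  have hP : (Sᴴ * S).PosDef :=
    .conjTranspose_mul_self S (mulVec_injective_of_mem_symplecticGroup hS)
  have hPs : Sᴴ * S ∈ symplecticGroup l 𝕜 := mul_mem (conjTranspose_mem_symplecticGroup hS) hS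
  obtain ⟨W, ⟨hWs, hWu⟩, μ, hμ, hPW⟩ := exists_symplectic_unitary_diagonalization hP hPs
  let d : l → 𝕜 := fun i => (√(μ i) : ℝ)
  have hd_pos (i : l) : 0 < √(μ i) := Real.sqrt_pos.mpr (hμ i)
  have hd (i : l) : d i ≠ 0 := RCLike.ofReal_ne_zero.mpr (hd_pos i).ne'
  have hd_star : star d = d := funext fun _ => RCLike.conj_ofReal _
  have hd_mul : (fun i => (μ i : 𝕜)) = d * d :=
    funext fun i => by rw [Pi.mul_apply, ← RCLike.ofReal_mul, Real.mul_self_sqrt (hμ i).le]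
  have hD_inv : symplecticDiagonal d⁻¹ ∈ symplecticGroup l 𝕜 :=
    symplecticDiagonal_mem_symplecticGroup fun i => inv_ne_zero (hd i)
  refine ⟨S * W * symplecticDiagonal d⁻¹, ⟨mul_mem (mul_mem hS hWs) hD_inv,
    mul_mul_symplecticDiagonal_inv_mem_unitaryGroup hWu hd hd_star (hd_mul ▸ hPW)⟩,
    Wᴴ, ⟨conjTranspose_mem_symplecticGroup hWs, Unitary.star_mem hWu⟩, _, hd_pos, ?_⟩
  rw [Matrix.mul_assoc (S * W), symplecticDiagonal_inv_mul_self hd, Matrix.mul_one,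
    Matrix.mul_assoc, ← star_eq_conjTranspose, mem_unitaryGroup_iff.mp hWu, Matrix.mul_one]

end Symplectic

lemma J_eq_neg_matrix_J (N : ℕ) : _root_.J N = -Matrix.J (Fin N) ℝ := by
  simp [_root_.J, Matrix.J, fromBlocks_neg]

lemma transpose_mul_J_mul_self_eq_iff {N : ℕ} {A : Matrix (Fin N ⊕ Fin N) (Fin N ⊕ Fin N) ℝ} :
    Aᵀ * _root_.J N * A = _root_.J N ↔ A ∈ symplecticGroup (Fin N) ℝ := by
  rw [J_eq_neg_matrix_J, Matrix.mul_neg, Matrix.neg_mul, neg_inj, SymplecticGroup.mem_iff']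

/-- Every symplectic matrix admits a symplectic singular value decomposition
`S = U * D * V` with `U`, `V` orthogonal symplectic and `D` diagonal, the first `N`
diagonal entries being `d i > 0` and the last `N` being `(d i)⁻¹`. -/
theorem stmt_1 (N : ℕ) (S : Matrix (Fin N ⊕ Fin N) (Fin N ⊕ Fin N) ℝ)
    (hS : Sᵀ * J N * S = J N) :
    ∃ (U V : Matrix (Fin N ⊕ Fin N) (Fin N ⊕ Fin N) ℝ) (d : Fin N → ℝ),
      Uᵀ * J N * U = J N ∧ Uᵀ * U = 1 ∧
      Vᵀ * J N * V = J N ∧ Vᵀ * V = 1 ∧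
      (∀ i, 0 < d i) ∧
      S = U * Matrix.diagonal (Sum.elim d (fun i => (d i)⁻¹)) * V := by
  obtain ⟨U, hU, V, hV, d, hd, hS_eq⟩ := stmt_1_general (transpose_mul_J_mul_self_eq_iff.mp hS)
  exact ⟨U, V, d, transpose_mul_J_mul_self_eq_iff.mpr hU.1, mem_unitaryGroup_iff'.mp hU.2,
    transpose_mul_J_mul_self_eq_iff.mpr hV.1, mem_unitaryGroup_iff'.mp hV.2, hd, hS_eq⟩
end

section
/- Let S, W ∈ Sp(2N,ℝ). Then the matrix (SᵀS − WᵀS)·J is skew-symmetric if and only if SᵀS − (SᵀS)⁻¹ = SᵀW − (SᵀW)⁻¹. Consequently, the critical point condition for the cost function 𝒥(S) = Tr[(S − W)ᵀ(S − W)] on Sp(2N,ℝ), namely that Tr[(SᵀS − WᵀS)·J·Y] = 0 for all symmetric Y, is equivalent to the equation SᵀS − (SᵀS)⁻¹ = SᵀW − (SᵀW)⁻¹. -/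
open Matrix

/-!
The operation `X ↦ J⁻¹ Xᵀ J` is the adjoint with respect to the symplectic form, and it agrees with
inversion on the symplectic group. Since `J` is skew-symmetric, `Xᵀ J` is skew-symmetric exactly
when `X` is its own adjoint. For `X = SᵀS - SᵀW`, a difference of two symplectic matrices, this says
that `SᵀS - SᵀW = (SᵀS)⁻¹ - (SᵀW)⁻¹`. The trace condition is the same skew-symmetry, because the
skew-symmetric matrices are the orthogonal complement of the symmetric ones under the trace pairing.
-/

section TracePairing

variable {n R : Type*} [Fintype n] [CommRing R] {K : Matrix n n R}

lemma transpose_eq_neg_of_forall_isSymm_trace_mul_eq_zero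
    (hK : ∀ Y : Matrix n n R, Y.IsSymm → (K * Y).trace = 0) : Kᵀ = -K := by
  rw [eq_neg_iff_add_eq_zero, ext_iff_trace_mul_right]
  intro Y
  rw [zero_mul, trace_zero]
  calc ((Kᵀ + K) * Y).trace
      = (K * Yᵀ).trace + (K * Y).trace := by
        rw [add_mul, trace_add, ← trace_transpose_mul K Yᵀ, transpose_transpose]
    _ = (K * (Y + Yᵀ)).trace := by rw [mul_add, trace_add, add_comm]
    _ = 0 := hK _ (isSymm_add_transpose_self Y)

lemma trace_mul_eq_zero_of_transpose_eq_neg_of_isSymm (h2 : IsLeftRegular (2 : R))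
    (hK : Kᵀ = -K) {Y : Matrix n n R} (hY : Y.IsSymm) : (K * Y).trace = 0 := by
  have eq_neg_self : (K * Y).trace = -(K * Y).trace := by
    rw [← trace_neg, ← neg_mul, ← hK, ← trace_transpose_mul K Y, hY.eq]
  apply h2.mul_left_eq_zero_iff.mp
  rw [two_mul, ← eq_neg_iff_add_eq_zero]
  exact eq_neg_self

lemma forall_isSymm_trace_mul_eq_zero_iff (h2 : IsLeftRegular (2 : R)) :
    (∀ Y : Matrix n n R, Y.IsSymm → (K * Y).trace = 0) ↔ Kᵀ = -K :=
  ⟨transpose_eq_neg_of_forall_isSymm_trace_mul_eq_zero,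
    fun hK _ ↦ trace_mul_eq_zero_of_transpose_eq_neg_of_isSymm h2 hK⟩

end TracePairing

section Adjoint

variable {n R : Type*} [Fintype n] [CommRing R] {Ω X : Matrix n n R}

lemma transpose_mul_skew_iff_isSelfAdjoint (hΩ : Ωᵀ = -Ω) :
    (Xᵀ * Ω)ᵀ = -(Xᵀ * Ω) ↔ Ω.IsSelfAdjoint X := by
  rw [transpose_mul, transpose_transpose, hΩ, neg_mul, neg_inj, eq_comm]
  rfl

lemma isSelfAdjoint_iff_eq_inv_mul_transpose_mul [DecidableEq n] (hΩ : IsUnit Ω.det) :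
    Ω.IsSelfAdjoint X ↔ X = Ω⁻¹ * Xᵀ * Ω := by
  constructor
  · intro (hX : Xᵀ * Ω = Ω * X)
    rw [mul_assoc, hX, nonsing_inv_mul_cancel_left _ _ hΩ]
  · intro hX
    calc Xᵀ * Ω = Ω * (Ω⁻¹ * Xᵀ * Ω) := by rw [mul_assoc Ω⁻¹, mul_nonsing_inv_cancel_left _ _ hΩ]
      _ = Ω * X := by rw [← hX]

end Adjoint

section Symplectic

variable {l R : Type*} [DecidableEq l] [Fintype l] [CommRing R]
  {A B S W : Matrix (l ⊕ l) (l ⊕ l) R}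

lemma isSelfAdjoint_J_sub_iff (hA : A ∈ symplecticGroup l R) (hB : B ∈ symplecticGroup l R) :
    (Matrix.J l R).IsSelfAdjoint (A - B) ↔ A - A⁻¹ = B - B⁻¹ := by
  have adjoint_sub : (Matrix.J l R)⁻¹ * (A - B)ᵀ * Matrix.J l R = A⁻¹ - B⁻¹ := by
    rw [J_inv, SymplecticGroup.inv_eq_symplectic_inv A hA,
      SymplecticGroup.inv_eq_symplectic_inv B hB, transpose_sub, mul_sub, sub_mul]
  rw [isSelfAdjoint_iff_eq_inv_mul_transpose_mul (isUnit_det_J l R), adjoint_sub,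
    sub_eq_sub_iff_sub_eq_sub]

lemma transpose_mul_sub_mul_J_skew_iff
    (hS : S ∈ symplecticGroup l R) (hW : W ∈ symplecticGroup l R) :
    ((Sᵀ * S - Wᵀ * S) * Matrix.J l R)ᵀ = -((Sᵀ * S - Wᵀ * S) * Matrix.J l R) ↔
      Sᵀ * S - (Sᵀ * S)⁻¹ = Sᵀ * W - (Sᵀ * W)⁻¹ := by
  have hSt : Sᵀ ∈ symplecticGroup l R := SymplecticGroup.transpose_mem hS
  have transpose_diff : (Sᵀ * S - Sᵀ * W)ᵀ = Sᵀ * S - Wᵀ * S := by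
    simp only [transpose_sub, transpose_mul, transpose_transpose]
  rw [← transpose_diff, transpose_mul_skew_iff_isSelfAdjoint (J_transpose l R),
    isSelfAdjoint_J_sub_iff (mul_mem hSt hS) (mul_mem hSt hW)]

theorem stmt_9_general (h2 : IsLeftRegular (2 : R))
    (hS : S ∈ symplecticGroup l R) (hW : W ∈ symplecticGroup l R) :
    (((Sᵀ * S - Wᵀ * S) * Matrix.J l R)ᵀ = -((Sᵀ * S - Wᵀ * S) * Matrix.J l R) ↔
      Sᵀ * S - (Sᵀ * S)⁻¹ = Sᵀ * W - (Sᵀ * W)⁻¹) ∧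
    ((∀ Y : Matrix (l ⊕ l) (l ⊕ l) R, Y.IsSymm →
        ((Sᵀ * S - Wᵀ * S) * Matrix.J l R * Y).trace = 0) ↔
      Sᵀ * S - (Sᵀ * S)⁻¹ = Sᵀ * W - (Sᵀ * W)⁻¹) :=
  have skew_iff := transpose_mul_sub_mul_J_skew_iff hS hW
  ⟨skew_iff, (forall_isSymm_trace_mul_eq_zero_iff h2).trans skew_iff⟩

end Symplectic

lemma J_eq_neg_J (N : ℕ) : J N = -Matrix.J (Fin N) ℝ := by
  simp [_root_.J, Matrix.J, fromBlocks_neg]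

lemma mem_symplecticGroup_iff_transpose_mul_J_mul {N : ℕ}
    {A : Matrix (Fin N ⊕ Fin N) (Fin N ⊕ Fin N) ℝ} :
    A ∈ symplecticGroup (Fin N) ℝ ↔ Aᵀ * J N * A = J N := by
  rw [SymplecticGroup.mem_iff', J_eq_neg_J, mul_neg, neg_mul, neg_inj]

/-- For symplectic `S`, `W`: the matrix `(SᵀS − WᵀS)·J` is skew-symmetric iff
`SᵀS − (SᵀS)⁻¹ = SᵀW − (SᵀW)⁻¹`; consequently the first-order criticality condition
`Tr[(SᵀS − WᵀS)·J·Y] = 0` for all symmetric `Y` is equivalent to the same equation. -/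
theorem stmt_9 (N : ℕ) (S W : Matrix (Fin N ⊕ Fin N) (Fin N ⊕ Fin N) ℝ)
    (hS : Sᵀ * J N * S = J N) (hW : Wᵀ * J N * W = J N) :
    (((Sᵀ * S - Wᵀ * S) * J N)ᵀ = -((Sᵀ * S - Wᵀ * S) * J N) ↔
      Sᵀ * S - (Sᵀ * S)⁻¹ = Sᵀ * W - (Sᵀ * W)⁻¹) ∧
    ((∀ Y : Matrix (Fin N ⊕ Fin N) (Fin N ⊕ Fin N) ℝ, Yᵀ = Y →
        ((Sᵀ * S - Wᵀ * S) * J N * Y).trace = 0) ↔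
      Sᵀ * S - (Sᵀ * S)⁻¹ = Sᵀ * W - (Sᵀ * W)⁻¹) := by
  simpa [J_eq_neg_J, neg_eq_iff_eq_neg, IsSymm] using
    stmt_9_general (IsRegular.of_ne_zero two_ne_zero).left
      (mem_symplecticGroup_iff_transpose_mul_J_mul.mpr hS)
      (mem_symplecticGroup_iff_transpose_mul_J_mul.mpr hW)
end

section
/- Let E be an n×n real diagonal matrix with strictly positive diagonal entries, and let U, V be real orthogonal n×n matrices such that U·E·V = E. Then V = Uᵀ and U commutes with E (equivalently, U stabilizes E: Uᵀ·E·U = E). -/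
open Matrix

/-!
If `u a v = a` with `a` self-adjoint, then `a² = a a⋆ = u a v v⋆ a u⋆ = (u a u⋆)²`. For `a ≥ 0` both
`a` and `u a u⋆` are nonnegative square roots of `a²`, so they coincide and `u` commutes with `a`.
Then `a = u a v = a u v`, and cancelling the invertible `a` leaves `u v = 1`.
-/

section Monoid

variable {M : Type*} [Monoid M]

lemma mul_eq_one_of_commute_of_mul_mul_eq {u a v : M} (ha : IsUnit a) (hua : Commute u a)
    (h : u * a * v = a) : u * v = 1 := by
  apply ha.mul_left_cancel
  rw [mul_one, ← mul_assoc, ← hua.eq, h]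

variable [StarMul M]

lemma mul_self_conj_star_of_mul_mul_eq {u a v : M} (hu : star u * u = 1) (hv : v * star v = 1)
    (ha : IsSelfAdjoint a) (h : u * a * v = a) :
    (u * a * star u) * (u * a * star u) = a * a := by
  calc (u * a * star u) * (u * a * star u)
      = u * a * (star u * u) * (a * star u) := by simp only [mul_assoc]
    _ = u * a * (v * star v) * (a * star u) := by rw [hu, hv]
    _ = (u * a * v) * star (u * a * v) := by simp only [star_mul, ha.star_eq, mul_assoc]
    _ = a * a := by rw [h, ha.star_eq]

end Monoid

section SquareRoot

variable {A : Type*} [PartialOrder A] [Ring A] [StarRing A] [StarOrderedRing A] [Algebra ℝ A]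
  [TopologicalSpace A] [IsSemitopologicalRing A] [T2Space A]
  [ContinuousFunctionalCalculus ℝ A IsSelfAdjoint] [NonnegSpectrumClass ℝ A]

lemma conj_star_eq_of_mul_mul_eq {u a v : A} (hu : star u * u = 1) (hv : v * star v = 1)
    (ha : 0 ≤ a) (h : u * a * v = a) : u * a * star u = a :=
  (CFC.mul_self_eq_mul_self_iff _ _ (star_right_conjugate_nonneg ha u) ha).mp
    (mul_self_conj_star_of_mul_mul_eq hu hv (.of_nonneg ha) h)

lemma commute_of_mul_mul_eq {u a v : A} (hu : star u * u = 1) (hv : v * star v = 1)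
    (ha : 0 ≤ a) (h : u * a * v = a) : Commute u a := by
  calc u * a = u * a * star u * u := by rw [mul_assoc (u * a), hu, mul_one]
    _ = a * u := by rw [conj_star_eq_of_mul_mul_eq hu hv ha h]

theorem stmt_14_general {u a v : A} (hu : star u * u = 1) (hv : v * star v = 1)
    (ha : IsStrictlyPositive a) (h : u * a * v = a) :
    v = star u ∧ Commute u a ∧ star u * a * u = a := by
  have hua : Commute u a := commute_of_mul_mul_eq hu hv ha.nonneg h
  have huv : u * v = 1 := mul_eq_one_of_commute_of_mul_mul_eq ha.isUnit hua h
  refine ⟨(left_inv_eq_right_inv hu huv).symm, hua, ?_⟩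
  rw [mul_assoc, ← hua.eq, ← mul_assoc, hu, one_mul]

end SquareRoot

/-- Uniqueness of SVDs of a positive diagonal matrix: if `E` is diagonal with strictly
positive entries and `U`, `V` are orthogonal with `U E V = E`, then `V = Uᵀ` and `U`
commutes with `E` (equivalently, `Uᵀ E U = E`). -/
theorem stmt_14 (n : ℕ) (e : Fin n → ℝ) (he : ∀ i, 0 < e i)
    (U V : Matrix (Fin n) (Fin n) ℝ) (hU : Uᵀ * U = 1) (hV : Vᵀ * V = 1)
    (h : U * Matrix.diagonal e * V = Matrix.diagonal e) :
    V = Uᵀ ∧ U * Matrix.diagonal e = Matrix.diagonal e * U ∧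
      Uᵀ * Matrix.diagonal e * U = Matrix.diagonal e := by
  -- The transpose of a real matrix is definitionally its `star`.
  open scoped MatrixOrder in
  exact stmt_14_general (u := U) hU (mul_eq_one_comm.mp hV)
    (PosDef.diagonal he).isStrictlyPositive h
end

section
/- Let N ≥ 1, let W ∈ Sp(2N,ℝ), and let S* ∈ Sp(2N,ℝ) satisfy the critical point equation (S*)ᵀS* − ((S*)ᵀS*)⁻¹ = (S*)ᵀW − ((S*)ᵀW)⁻¹ together with S* ≠ W. Then the restriction of the cost function 𝒥(S) = Tr[(S − W)ᵀ(S − W)] to the symplectic group Sp(2N,ℝ) (with the subspace topology inherited from the space of real 2N×2N matrices) has neither a local minimum nor a local maximum at S*. In particular, S* = W is the unique local minimum of 𝒥 on Sp(2N,ℝ) and every other critical point is a saddle. -/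
open Matrix

/-- The cost function `𝒥(S) = Tr[(S − W)ᵀ(S − W)]` restricted to the symplectic group
(with the subspace topology). -/
noncomputable def costOnSp (N : ℕ) (W : Matrix (Fin N ⊕ Fin N) (Fin N ⊕ Fin N) ℝ)
    (S : {S : Matrix (Fin N ⊕ Fin N) (Fin N ⊕ Fin N) ℝ // Sᵀ * J N * S = J N}) : ℝ :=
  (((S : Matrix (Fin N ⊕ Fin N) (Fin N ⊕ Fin N) ℝ) - W)ᵀ *
    ((S : Matrix (Fin N ⊕ Fin N) (Fin N ⊕ Fin N) ℝ) - W)).trace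

/-!
Let `Ω` be the matrix of the symplectic form, `P = SᵀS` and `M = SᵀW`. The critical point equation
`P - P⁻¹ = M - M⁻¹` amounts to `M (P - M) P = -(P - M)`, so `P - M` maps every eigenvector of `P`,
with eigenvalue `r > 0` say, either to zero or to an eigenvector `w` of `M` with eigenvalue `-r⁻¹`.
If `S ≠ W`, the latter occurs for some eigenvector. As `M` is symplectic, `Ω w` is then an
eigenvector of `Mᵀ` with eigenvalue `-r`, so the orthogonal projection `Q` onto the span of `w` and
`Ω w` satisfies `tr (Q M) = -(r + r⁻¹) < 0`, and rotating `S` in this plane by a small angle `± t`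
lowers the average of the two costs. On the other hand, along a line of symplectic matrices
`t ↦ S (1 + t v (Ω v)ᵀ)` the cost is a strictly convex parabola, so no point of the group is a local
maximum.
-/

open Filter Topology

section LocalExtr

variable {X : Type*} [TopologicalSpace X] {s : Set X} {a : X}

lemma isLocalMinOn_of_isLocalMin_domRestrict {β : Type*} [Preorder β] {f : X → β} (ha : a ∈ s)
    (h : IsLocalMin (s.domRestrict f) ⟨a, ha⟩) : IsLocalMinOn f s a := by
  rw [IsLocalMinOn, nhdsWithin_eq_map_subtype_coe ha]
  exact h

lemma isLocalMaxOn_of_isLocalMax_domRestrict {β : Type*} [Preorder β] {f : X → β} (ha : a ∈ s)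
    (h : IsLocalMax (s.domRestrict f) ⟨a, ha⟩) : IsLocalMaxOn f s a := by
  rw [IsLocalMaxOn, nhdsWithin_eq_map_subtype_coe ha]
  exact h

variable {f : X → ℝ} {γ : ℝ → X}

lemma not_isLocalMinOn_of_eventually_add_neg_lt (hγ : ContinuousAt γ 0)
    (hγs : ∀ t, γ t ∈ s) (hγ0 : γ 0 = a)
    (hlt : ∀ᶠ t in 𝓝[>] 0, f (γ t) + f (γ (-t)) < 2 * f a) : ¬ IsLocalMinOn f s a := by
  intro hmin
  have hlim : Tendsto γ (𝓝 0) (𝓝[s] a) :=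
    tendsto_nhdsWithin_iff.2 ⟨hγ0 ▸ hγ.tendsto, .of_forall hγs⟩
  have hpos : ∀ᶠ t in 𝓝 (0 : ℝ), f a ≤ f (γ t) := hlim.eventually hmin
  have hneg : ∀ᶠ t in 𝓝 (0 : ℝ), f a ≤ f (γ (-t)) :=
    (continuous_neg.tendsto' (0 : ℝ) 0 neg_zero).eventually hpos
  obtain ⟨t, ht, ht₁, ht₂⟩ :=
    (hlt.and ((hpos.and hneg).filter_mono nhdsWithin_le_nhds)).exists
  linarith

lemma not_isLocalMaxOn_of_eventually_lt_add_neg (hγ : ContinuousAt γ 0)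
    (hγs : ∀ t, γ t ∈ s) (hγ0 : γ 0 = a)
    (hlt : ∀ᶠ t in 𝓝[>] 0, 2 * f a < f (γ t) + f (γ (-t))) : ¬ IsLocalMaxOn f s a := by
  refine fun hmax ↦ not_isLocalMinOn_of_eventually_add_neg_lt hγ hγs hγ0 ?_ hmax.neg
  filter_upwards [hlt] with t ht
  linarith

end LocalExtr

section FrobeniusDistSq

variable {m n : Type*} [Fintype m] [Fintype n]

/-- The squared Frobenius distance between two real matrices, written as a trace. Its restriction
to the symplectic group is the cost function. -/
def frobeniusDistSq (W S : Matrix m n ℝ) : ℝ := ((S - W)ᵀ * (S - W)).trace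

lemma frobeniusDistSq_add_add_frobeniusDistSq_sub (W S X : Matrix m n ℝ) :
    frobeniusDistSq W (S + X) + frobeniusDistSq W (S - X) =
      2 * frobeniusDistSq W S + 2 * (Xᵀ * X).trace := by
  simp only [frobeniusDistSq, transpose_sub, transpose_add, Matrix.mul_add, Matrix.mul_sub,
    Matrix.add_mul, Matrix.sub_mul, trace_add, trace_sub]
  ring

lemma trace_transpose_mul_self_pos {A : Matrix m n ℝ} (hA : A ≠ 0) : 0 < (Aᵀ * A).trace := by
  rw [← conjTranspose_eq_transpose_of_trivial]
  exact (posSemidef_conjTranspose_mul_self A).trace_nonneg.lt_of_ne'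
    (trace_conjTranspose_mul_self_eq_zero_iff.not.2 hA)

lemma frobeniusDistSq_mul_of_mem_orthogonalGroup [DecidableEq n] (W S : Matrix m n ℝ)
    {R : Matrix n n ℝ} (hR : R ∈ orthogonalGroup n ℝ) :
    frobeniusDistSq W (S * R) =
      (Sᵀ * S).trace - 2 * (Rᵀ * (Sᵀ * W)).trace + (Wᵀ * W).trace := by
  have hRR : R * Rᵀ = 1 := (mem_orthogonalGroup_iff n ℝ).1 hR
  have hquad : ((S * R)ᵀ * (S * R)).trace = (Sᵀ * S).trace := by
    rw [trace_mul_comm, transpose_mul, Matrix.mul_assoc, ← Matrix.mul_assoc R, hRR,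
      Matrix.one_mul, trace_mul_comm]
  have hcross : ((S * R)ᵀ * W).trace = (Rᵀ * (Sᵀ * W)).trace := by
    rw [transpose_mul, Matrix.mul_assoc]
  have hcross' : (Wᵀ * (S * R)).trace = (Rᵀ * (Sᵀ * W)).trace := by
    rw [← hcross, ← trace_transpose (Wᵀ * (S * R)), transpose_mul Wᵀ, transpose_transpose]
  rw [frobeniusDistSq, transpose_sub, Matrix.sub_mul, Matrix.mul_sub, Matrix.mul_sub, trace_sub,
    trace_sub, trace_sub, hquad, hcross, hcross']
  ring

end FrobeniusDistSq

section FormIsometries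

variable {n R : Type*} [Fintype n] [DecidableEq n] [CommRing R] {Ω S : Matrix n n R}

/-- The matrices preserving the bilinear form with matrix `Ω`. For the standard symplectic form
this is the symplectic group. -/
def formIsometries (Ω : Matrix n n R) : Submonoid (Matrix n n R) where
  carrier := {S | Sᵀ * Ω * S = Ω}
  one_mem' := by simp
  mul_mem' {S T} hS hT := by
    calc (S * T)ᵀ * Ω * (S * T) = Tᵀ * (Sᵀ * Ω * S) * T := by
          rw [transpose_mul]; noncomm_ring
      _ = Ω := by rw [hS, hT]

lemma mem_formIsometries_iff : S ∈ formIsometries Ω ↔ Sᵀ * Ω * S = Ω := Iff.rfl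

lemma isUnit_of_mem_formIsometries (hΩ : IsUnit Ω) (hS : S ∈ formIsometries Ω) : IsUnit S := by
  rw [← mem_formIsometries_iff.1 hS] at hΩ
  exact isUnit_of_mul_isUnit_right hΩ

lemma transpose_mem_formIsometries (hΩ : Ω * Ω = -1) (hS : S ∈ formIsometries Ω) :
    Sᵀ ∈ formIsometries Ω := by
  have hleft : -(Ω * Sᵀ * Ω) * S = 1 := by
    rw [neg_mul, mul_assoc, mul_assoc, ← mul_assoc Sᵀ, mem_formIsometries_iff.1 hS, hΩ, neg_neg]
  have hright : S * Ω * Sᵀ * Ω = -1 := by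
    rw [← mul_eq_one_comm.1 hleft]; noncomm_ring
  rw [mem_formIsometries_iff, transpose_transpose]
  calc S * Ω * Sᵀ = -(S * Ω * Sᵀ * (Ω * Ω)) := by rw [hΩ, mul_neg_one, neg_neg]
    _ = -(S * Ω * Sᵀ * Ω * Ω) := by rw [← mul_assoc]
    _ = Ω := by rw [hright, neg_one_mul, neg_neg]

lemma mem_formIsometries_of_mem_orthogonalGroup_of_commute (hS : S ∈ orthogonalGroup n R)
    (hΩS : Commute Ω S) : S ∈ formIsometries Ω := by
  have hSS : Sᵀ * S = 1 := (mem_orthogonalGroup_iff' n R).1 hS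
  rw [mem_formIsometries_iff, mul_assoc, hΩS.eq, ← mul_assoc, hSS, one_mul]

end FormIsometries

section Eigenvectors

lemma mul_sub_mul_eq_neg_sub_of_sub_inv_eq_sub_inv {n R : Type*} [Fintype n] [DecidableEq n]
    [CommRing R] {P M : Matrix n n R} (hP : IsUnit P) (hM : IsUnit M)
    (h : P - P⁻¹ = M - M⁻¹) : M * (P - M) * P = -(P - M) := by
  have hdiff : P - M = P⁻¹ - M⁻¹ := by
    rw [sub_eq_sub_iff_add_eq_add] at h ⊢
    rw [h, add_comm]
  have hPP : P⁻¹ * P = 1 := nonsing_inv_mul P ((isUnit_iff_isUnit_det P).1 hP)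
  have hMM : M * M⁻¹ = 1 := mul_nonsing_inv M ((isUnit_iff_isUnit_det M).1 hM)
  rw [hdiff, mul_sub, hMM, sub_mul, mul_assoc, hPP, mul_one, one_mul, ← hdiff, neg_sub]

lemma exists_mulVec_eigenvectorBasis_ne_zero {m n 𝕜 : Type*} [Fintype n] [DecidableEq n]
    [RCLike 𝕜] {P : Matrix n n 𝕜} (hP : P.IsHermitian) {D : Matrix m n 𝕜} (hD : D ≠ 0) :
    ∃ i, D *ᵥ hP.eigenvectorBasis i ≠ 0 := by
  contrapose! hD
  set U : Matrix n n 𝕜 := ↑hP.eigenvectorUnitary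
  have hU : U * star U = 1 := Unitary.mul_star_self_of_mem hP.eigenvectorUnitary.2
  have hDU : D * U = 0 := by
    ext i j
    exact congrFun (hD j) i
  rw [← Matrix.mul_one D, ← hU, ← Matrix.mul_assoc, hDU, Matrix.zero_mul]

variable {n : Type*} [Fintype n] [DecidableEq n]

lemma exists_neg_eigenvector_of_sub_inv_eq_sub_inv {P M : Matrix n n ℝ} (hP : P.PosDef)
    (hM : IsUnit M) (h : P - P⁻¹ = M - M⁻¹) (hne : P ≠ M) :
    ∃ μ < (0 : ℝ), ∃ w : n → ℝ, w ≠ 0 ∧ M *ᵥ w = μ • w := by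
  obtain ⟨i, hi⟩ := exists_mulVec_eigenvectorBasis_ne_zero hP.isHermitian (sub_ne_zero.2 hne)
  set r := hP.isHermitian.eigenvalues i
  set z : n → ℝ := ⇑(hP.isHermitian.eigenvectorBasis i)
  have hr : 0 < r := hP.eigenvalues_pos i
  have hPz : P *ᵥ z = r • z := hP.isHermitian.mulVec_eigenvectorBasis i
  have hMw : r • (M *ᵥ ((P - M) *ᵥ z)) = -((P - M) *ᵥ z) := by
    rw [← neg_mulVec, ← mul_sub_mul_eq_neg_sub_of_sub_inv_eq_sub_inv hP.isUnit hM h,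
      ← mulVec_mulVec, hPz, mulVec_smul, mulVec_mulVec]
  refine ⟨-r⁻¹, neg_neg_of_pos (inv_pos.2 hr), (P - M) *ᵥ z, hi, ?_⟩
  rw [neg_smul, ← smul_neg, ← hMw, inv_smul_smul₀ hr.ne']

lemma transpose_mulVec_eq_inv_smul_of_mem_formIsometries {K : Type*} [Field K]
    {Ω M : Matrix n n K} (hM : M ∈ formIsometries Ω) {μ : K} (hμ : μ ≠ 0) {w : n → K}
    (hw : M *ᵥ w = μ • w) : Mᵀ *ᵥ (Ω *ᵥ w) = μ⁻¹ • (Ω *ᵥ w) := by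
  have hΩw : μ • (Mᵀ *ᵥ (Ω *ᵥ w)) = Ω *ᵥ w := by
    conv_rhs => rw [← mem_formIsometries_iff.1 hM]
    rw [← mulVec_mulVec, hw, mulVec_smul, mulVec_mulVec]
  rw [eq_inv_smul_iff₀ hμ, hΩw]

end Eigenvectors

section Transvections

lemma vecMul_eq_neg_mulVec_of_transpose_eq_neg {n R : Type*} [Fintype n] [CommRing R]
    {Ω : Matrix n n R} (hΩt : Ωᵀ = -Ω) (v : n → R) : v ᵥ* Ω = -(Ω *ᵥ v) := by
  rw [← mulVec_transpose, hΩt, neg_mulVec]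

variable {n : Type*} [Fintype n] {Ω : Matrix n n ℝ}

lemma dotProduct_mulVec_self_eq_zero_of_transpose_eq_neg (hΩt : Ωᵀ = -Ω) (v : n → ℝ) :
    v ⬝ᵥ (Ω *ᵥ v) = 0 := by
  have hneg : v ⬝ᵥ (Ω *ᵥ v) = -(v ⬝ᵥ (Ω *ᵥ v)) := by
    conv_lhs => rw [dotProduct_mulVec, vecMul_eq_neg_mulVec_of_transpose_eq_neg hΩt,
      neg_dotProduct, dotProduct_comm]
  linarith

variable [DecidableEq n]

/-- The transvection `x ↦ x + t ⟨Ω v, x⟩ v` of the alternating form with matrix `Ω`. -/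
def formTransvection (Ω : Matrix n n ℝ) (v : n → ℝ) (t : ℝ) : Matrix n n ℝ :=
  1 + t • vecMulVec v (Ω *ᵥ v)

lemma formTransvection_mem_formIsometries (hΩt : Ωᵀ = -Ω) (v : n → ℝ) (t : ℝ) :
    formTransvection Ω v t ∈ formIsometries Ω := by
  set A : Matrix n n ℝ := vecMulVec v (Ω *ᵥ v)
  have hΩA : Ω * A = vecMulVec (Ω *ᵥ v) (Ω *ᵥ v) := mul_vecMulVec Ω v (Ω *ᵥ v)
  have hAΩ : Aᵀ * Ω = -vecMulVec (Ω *ᵥ v) (Ω *ᵥ v) := by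
    rw [transpose_vecMulVec, vecMulVec_mul, vecMul_eq_neg_mulVec_of_transpose_eq_neg hΩt,
      vecMulVec_neg]
  have hAΩA : Aᵀ * Ω * A = 0 := by
    rw [hAΩ, neg_mul, vecMulVec_mul_vecMulVec, dotProduct_comm,
      dotProduct_mulVec_self_eq_zero_of_transpose_eq_neg hΩt, zero_smul, vecMulVec_zero, neg_zero]
  calc (1 + t • A)ᵀ * Ω * (1 + t • A)
      = Ω + t • (Aᵀ * Ω + Ω * A) + (t * t) • (Aᵀ * Ω * A) := by
        simp only [transpose_add, transpose_one, transpose_smul, add_mul, mul_add, one_mul,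
          mul_one, smul_mul_assoc, mul_smul_comm]
        module
    _ = Ω := by rw [hAΩA, hAΩ, hΩA, neg_add_cancel, smul_zero, smul_zero, add_zero, add_zero]

theorem not_isLocalMaxOn_frobeniusDistSq (hΩt : Ωᵀ = -Ω) (hΩ : Ω ≠ 0) (W : Matrix n n ℝ)
    {S : Matrix n n ℝ} (hS : S ∈ formIsometries Ω) :
    ¬ IsLocalMaxOn (frobeniusDistSq W) (formIsometries Ω) S := by
  obtain ⟨v, hv⟩ : ∃ v, Ω *ᵥ v ≠ 0 := by
    contrapose! hΩ
    exact ext_of_mulVec_single fun i ↦ by rw [hΩ, zero_mulVec]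
  have hSv : S *ᵥ v ≠ 0 := by
    intro h
    rw [← mem_formIsometries_iff.1 hS, ← mulVec_mulVec, h, mulVec_zero] at hv
    exact hv rfl
  set X : Matrix n n ℝ := vecMulVec (S *ᵥ v) (Ω *ᵥ v)
  have hX : X ≠ 0 := vecMulVec_ne_zero hSv hv
  have hcurve (t : ℝ) : S * formTransvection Ω v t = S + t • X := by
    rw [formTransvection, mul_add, mul_one, mul_smul_comm, mul_vecMulVec]
  refine not_isLocalMaxOn_of_eventually_lt_add_neg (γ := fun t ↦ S + t • X) (by fun_prop)
    (fun t ↦ hcurve t ▸ mul_mem hS (formTransvection_mem_formIsometries hΩt v t)) (by simp) ?_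
  filter_upwards [self_mem_nhdsWithin] with t (ht : 0 < t)
  have hpos := trace_transpose_mul_self_pos (smul_ne_zero ht.ne' hX)
  rw [neg_smul, ← sub_eq_add_neg, frobeniusDistSq_add_add_frobeniusDistSq_sub]
  linarith

end Transvections

section PartialRotations

variable {n : Type*} [Fintype n] [DecidableEq n] {Ω Q : Matrix n n ℝ}

/-- The rotation `exp (t Ω)` of the range of `Q`, extended by the identity on the kernel of `Q`.
Here `Ω` is an orthogonal complex structure and `Q` an orthogonal projection commuting with it. -/
noncomputable def partialRotation (Ω Q : Matrix n n ℝ) (t : ℝ) : Matrix n n ℝ :=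
  1 + (Real.cos t - 1) • Q + Real.sin t • (Ω * Q)

lemma partialRotation_transpose (hΩt : Ωᵀ = -Ω) (hQt : Q.IsSymm) (hΩQ : Commute Ω Q) (t : ℝ) :
    (partialRotation Ω Q t)ᵀ = 1 + (Real.cos t - 1) • Q - Real.sin t • (Ω * Q) := by
  simp [partialRotation, hQt.eq, hΩt, hΩQ.eq, sub_eq_add_neg]

lemma partialRotation_mem_orthogonalGroup (hΩt : Ωᵀ = -Ω) (hΩ : Ω * Ω = -1) (hQt : Q.IsSymm)
    (hQ : IsIdempotentElem Q) (hΩQ : Commute Ω Q) (t : ℝ) :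
    partialRotation Ω Q t ∈ orthogonalGroup n ℝ := by
  have hΩQQ : Ω * Q * Q = Ω * Q := by rw [mul_assoc, hQ.eq]
  have hQΩQ : Q * (Ω * Q) = Ω * Q := by rw [← mul_assoc, ← hΩQ.eq, hΩQQ]
  have hsq : Ω * Q * (Ω * Q) = -Q := by rw [mul_assoc, hQΩQ, ← mul_assoc, hΩ, neg_one_mul]
  rw [mem_orthogonalGroup_iff']
  calc (partialRotation Ω Q t)ᵀ * partialRotation Ω Q t
      = 1 + (Real.cos t ^ 2 + Real.sin t ^ 2 - 1) • Q := by
        rw [partialRotation_transpose hΩt hQt hΩQ, partialRotation]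
        simp only [add_mul, sub_mul, mul_add, one_mul, mul_one, smul_mul_assoc, mul_smul_comm,
          hΩQQ, hQΩQ, hsq, hQ.eq]
        module
    _ = 1 := by rw [Real.cos_sq_add_sin_sq, sub_self, zero_smul, add_zero]

lemma commute_partialRotation (hΩQ : Commute Ω Q) (t : ℝ) :
    Commute Ω (partialRotation Ω Q t) :=
  ((Commute.one_right Ω).add_right (hΩQ.smul_right _)).add_right
    (((Commute.refl Ω).mul_right hΩQ).smul_right _)

theorem not_isLocalMinOn_frobeniusDistSq_of_trace_neg (hΩt : Ωᵀ = -Ω) (hΩ : Ω * Ω = -1)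
    (hQt : Q.IsSymm) (hQ : IsIdempotentElem Q) (hΩQ : Commute Ω Q) {W S : Matrix n n ℝ}
    (hS : S ∈ formIsometries Ω) (htrace : (Q * (Sᵀ * W)).trace < 0) :
    ¬ IsLocalMinOn (frobeniusDistSq W) (formIsometries Ω) S := by
  have horth := partialRotation_mem_orthogonalGroup hΩt hΩ hQt hQ hΩQ
  have hcost (t : ℝ) : frobeniusDistSq W (S * partialRotation Ω Q t) = frobeniusDistSq W S
      - 2 * (Real.cos t - 1) * (Q * (Sᵀ * W)).trace
      + 2 * Real.sin t * (Ω * Q * (Sᵀ * W)).trace := by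
    have hbase := frobeniusDistSq_mul_of_mem_orthogonalGroup W S (one_mem _)
    rw [mul_one, transpose_one, one_mul] at hbase
    rw [frobeniusDistSq_mul_of_mem_orthogonalGroup W S (horth t), hbase,
      partialRotation_transpose hΩt hQt hΩQ]
    simp only [add_mul, sub_mul, one_mul, smul_mul_assoc, trace_add, trace_sub, trace_smul,
      smul_eq_mul]
    ring
  refine not_isLocalMinOn_of_eventually_add_neg_lt (γ := fun t ↦ S * partialRotation Ω Q t)
    (by unfold partialRotation; fun_prop)
    (fun t ↦ mul_mem hS (mem_formIsometries_of_mem_orthogonalGroup_of_commute (horth t)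
      (commute_partialRotation hΩQ t))) (by simp [partialRotation]) ?_
  filter_upwards [Ioo_mem_nhdsGT Real.pi_pos] with t ht
  have hcos : Real.cos t < 1 :=
    Real.cos_zero ▸ Real.cos_lt_cos_of_nonneg_of_le_pi le_rfl ht.2.le ht.1
  rw [hcost, hcost, Real.cos_neg, Real.sin_neg]
  nlinarith

end PartialRotations

section ComplexLineProjections

variable {n : Type*} [Fintype n] {Ω : Matrix n n ℝ} {w : n → ℝ}

/-- The orthogonal projection onto the span of `w` and `Ω w`, where `w ≠ 0` and `Ω` is an orthogonal
complex structure. -/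
noncomputable def complexLineProj (Ω : Matrix n n ℝ) (w : n → ℝ) : Matrix n n ℝ :=
  (w ⬝ᵥ w)⁻¹ • (vecMulVec w w + vecMulVec (Ω *ᵥ w) (Ω *ᵥ w))

lemma complexLineProj_isSymm (Ω : Matrix n n ℝ) (w : n → ℝ) : (complexLineProj Ω w).IsSymm := by
  simp [IsSymm, complexLineProj, transpose_vecMulVec]

variable [DecidableEq n]

lemma mulVec_dotProduct_mulVec_self (hΩt : Ωᵀ = -Ω) (hΩ : Ω * Ω = -1) (w : n → ℝ) :
    (Ω *ᵥ w) ⬝ᵥ (Ω *ᵥ w) = w ⬝ᵥ w := by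
  rw [dotProduct_mulVec, vecMul_eq_neg_mulVec_of_transpose_eq_neg hΩt, mulVec_mulVec, hΩ,
    neg_mulVec, one_mulVec, neg_neg]

lemma complexLineProj_isIdempotentElem (hΩt : Ωᵀ = -Ω) (hΩ : Ω * Ω = -1) (hw : w ≠ 0) :
    IsIdempotentElem (complexLineProj Ω w) := by
  have horth := dotProduct_mulVec_self_eq_zero_of_transpose_eq_neg hΩt w
  have hnorm := mulVec_dotProduct_mulVec_self hΩt hΩ w
  have hww : w ⬝ᵥ w ≠ 0 := dotProduct_self_eq_zero.not.2 hw
  simp only [IsIdempotentElem, complexLineProj, smul_mul_smul_comm, add_mul, mul_add,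
    vecMulVec_mul_vecMulVec, horth, dotProduct_comm (Ω *ᵥ w) w, hnorm, zero_smul, vecMulVec_zero,
    vecMulVec_smul, add_zero, zero_add, ← smul_add, smul_smul, inv_mul_cancel_right₀ hww]

lemma commute_complexLineProj (hΩt : Ωᵀ = -Ω) (hΩ : Ω * Ω = -1) (w : n → ℝ) :
    Commute Ω (complexLineProj Ω w) := by
  have hΩΩw : Ω *ᵥ (Ω *ᵥ w) = -w := by rw [mulVec_mulVec, hΩ, neg_mulVec, one_mulVec]
  simp only [commute_iff_eq, complexLineProj, mul_smul_comm, smul_mul_assoc, mul_add, add_mul,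
    mul_vecMulVec, vecMulVec_mul, vecMul_eq_neg_mulVec_of_transpose_eq_neg hΩt, hΩΩw,
    neg_vecMulVec, vecMulVec_neg, neg_neg]
  rw [add_comm]

lemma trace_complexLineProj_mul (hΩt : Ωᵀ = -Ω) (hΩ : Ω * Ω = -1) (hw : w ≠ 0)
    {M : Matrix n n ℝ} {μ ν : ℝ} (hMw : M *ᵥ w = μ • w)
    (hMΩw : Mᵀ *ᵥ (Ω *ᵥ w) = ν • (Ω *ᵥ w)) : (complexLineProj Ω w * M).trace = μ + ν := by
  have hww : w ⬝ᵥ w ≠ 0 := dotProduct_self_eq_zero.not.2 hw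
  have hw_term : (vecMulVec w w * M).trace = μ * (w ⬝ᵥ w) := by
    rw [trace_mul_comm, mul_vecMulVec, hMw, trace_vecMulVec, smul_dotProduct, smul_eq_mul]
  have hΩw_term : (vecMulVec (Ω *ᵥ w) (Ω *ᵥ w) * M).trace = ν * (w ⬝ᵥ w) := by
    rw [vecMulVec_mul, ← mulVec_transpose, hMΩw, trace_vecMulVec, dotProduct_smul,
      mulVec_dotProduct_mulVec_self hΩt hΩ, smul_eq_mul]
  rw [complexLineProj, smul_mul_assoc, trace_smul, add_mul, trace_add, hw_term, hΩw_term,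
    smul_eq_mul]
  field_simp

end ComplexLineProjections

section CriticalPoints

variable {n : Type*} [Fintype n] [DecidableEq n] {Ω W S : Matrix n n ℝ}

theorem not_isLocalMinOn_frobeniusDistSq_of_critical (hΩt : Ωᵀ = -Ω) (hΩ : Ω * Ω = -1)
    (hW : W ∈ formIsometries Ω) (hS : S ∈ formIsometries Ω)
    (hcrit : Sᵀ * S - (Sᵀ * S)⁻¹ = Sᵀ * W - (Sᵀ * W)⁻¹) (hne : S ≠ W) :
    ¬ IsLocalMinOn (frobeniusDistSq W) (formIsometries Ω) S := by
  have hΩu : IsUnit Ω := .of_mul_eq_one (-Ω) (by rw [mul_neg, hΩ, neg_neg])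
  have hSu : IsUnit S := isUnit_of_mem_formIsometries hΩu hS
  have hM : Sᵀ * W ∈ formIsometries Ω := mul_mem (transpose_mem_formIsometries hΩ hS) hW
  have hP : (Sᵀ * S).PosDef := by
    rw [← conjTranspose_eq_transpose_of_trivial]
    exact .conjTranspose_mul_self S (mulVec_injective_of_isUnit hSu)
  have hPM : Sᵀ * S ≠ Sᵀ * W := fun h ↦ hne (((isUnit_transpose S).2 hSu).mul_left_cancel h)
  obtain ⟨μ, hμ, w, hw, hMw⟩ := exists_neg_eigenvector_of_sub_inv_eq_sub_inv hP
    (isUnit_of_mem_formIsometries hΩu hM) hcrit hPM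
  have hMΩw := transpose_mulVec_eq_inv_smul_of_mem_formIsometries hM hμ.ne hMw
  refine not_isLocalMinOn_frobeniusDistSq_of_trace_neg hΩt hΩ (complexLineProj_isSymm Ω w)
    (complexLineProj_isIdempotentElem hΩt hΩ hw) (commute_complexLineProj hΩt hΩ w) hS ?_
  rw [trace_complexLineProj_mul hΩt hΩ hw hMw hMΩw]
  exact add_neg hμ (inv_lt_zero.2 hμ)

theorem stmt_15_general (hΩt : Ωᵀ = -Ω) (hΩ : Ω * Ω = -1)
    (hW : W ∈ formIsometries Ω) (hS : S ∈ formIsometries Ω)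
    (hcrit : Sᵀ * S - (Sᵀ * S)⁻¹ = Sᵀ * W - (Sᵀ * W)⁻¹) (hne : S ≠ W) :
    ¬ IsLocalMinOn (frobeniusDistSq W) (formIsometries Ω) S ∧
    ¬ IsLocalMaxOn (frobeniusDistSq W) (formIsometries Ω) S := by
  have hΩ0 : Ω ≠ 0 := by
    rintro rfl
    exact hne (eq_of_zero_eq_one (by simpa using congrArg Neg.neg hΩ) S W)
  exact ⟨not_isLocalMinOn_frobeniusDistSq_of_critical hΩt hΩ hW hS hcrit hne,
    not_isLocalMaxOn_frobeniusDistSq hΩt hΩ0 W hS⟩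

end CriticalPoints

lemma transpose_J (N : ℕ) : (J N)ᵀ = -J N := by
  simp [_root_.J, fromBlocks_transpose, fromBlocks_neg]

lemma J_mul_J (N : ℕ) : J N * J N = -1 := by
  simp [_root_.J, fromBlocks_multiply, ← fromBlocks_one, fromBlocks_neg]

/-- At any critical point `S* ≠ W` of the cost `𝒥(S) = Tr[(S − W)ᵀ(S − W)]` on the
symplectic group, `𝒥` has neither a local minimum nor a local maximum: every such
critical point is a saddle, so `S* = W` is the unique local minimum. -/
theorem stmt_15 (N : ℕ) (hN : 1 ≤ N)
    (W : Matrix (Fin N ⊕ Fin N) (Fin N ⊕ Fin N) ℝ) (hW : Wᵀ * J N * W = J N)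
    (Sstar : Matrix (Fin N ⊕ Fin N) (Fin N ⊕ Fin N) ℝ)
    (hSstar : Sstarᵀ * J N * Sstar = J N)
    (hcrit : Sstarᵀ * Sstar - (Sstarᵀ * Sstar)⁻¹ = Sstarᵀ * W - (Sstarᵀ * W)⁻¹)
    (hne : Sstar ≠ W) :
    ¬ IsLocalMin (costOnSp N W) ⟨Sstar, hSstar⟩ ∧
    ¬ IsLocalMax (costOnSp N W) ⟨Sstar, hSstar⟩ := by
  have hsaddle := stmt_15_general (transpose_J N) (J_mul_J N) hW hSstar hcrit hne
  exact ⟨fun hmin ↦ hsaddle.1 (isLocalMinOn_of_isLocalMin_domRestrict hSstar hmin),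
    fun hmax ↦ hsaddle.2 (isLocalMaxOn_of_isLocalMax_domRestrict hSstar hmax)⟩
end

section
/- Let W, S ∈ OSp(2N,ℝ) = Sp(2N,ℝ) ∩ O(2N) satisfy WᵀS = SᵀW. Then there exist an integer m with 0 ≤ m ≤ N and a matrix R ∈ OSp(2N,ℝ) such that S = W·Rᵀ·D_m·R, where D_m is the 2N×2N diagonal matrix whose diagonal is (−1,…,−1, 1,…,1, −1,…,−1, 1,…,1) with −1 occurring in the first m positions of each of the two N-blocks and +1 in the remaining positions. -/
open Matrix

/-- `D_m` is the 2N×2N diagonal matrix with `−1` in the first `m` positions of each of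
the two N-blocks of the diagonal and `+1` in the remaining positions. -/
noncomputable def Dm (N m : ℕ) : Matrix (Fin N ⊕ Fin N) (Fin N ⊕ Fin N) ℝ :=
  Matrix.diagonal (Sum.elim
    (fun j : Fin N => if (j : ℕ) < m then (-1 : ℝ) else 1)
    (fun j : Fin N => if (j : ℕ) < m then (-1 : ℝ) else 1))

/-!
The cost being critical at `S` says that `T = WᵀS ∈ OSp(2N, ℝ)` is symmetric. Identifying
`OSp(2N, ℝ)` with the unitary group `U(N)`, `T` corresponds to a Hermitian unitary matrix, whose
eigenvalues are `±1`. Diagonalizing it by a unitary matrix, with the eigenvalues `-1` listed first,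
and going back to real matrices gives `T = Rᵀ D_m R`.
-/

section Realification

variable {n : Type*} [Fintype n] [DecidableEq n]

variable (n) in
/-- The realification of complex matrices, sending `X + iY` to the block matrix
`[[X, -Y], [Y, X]]`; the signs are such that `i` is sent to Mathlib's `Matrix.J`. -/
def realification : Matrix n n ℂ →⋆ₐ[ℝ] Matrix (n ⊕ n) (n ⊕ n) ℝ where
  toFun Z := fromBlocks (Z.map Complex.re) (-Z.map Complex.im) (Z.map Complex.im) (Z.map Complex.re)
  map_one' := by
    rw [← fromBlocks_one]
    congr 1 <;> ext i j <;> by_cases h : i = j <;> simp [one_apply, h]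
  map_mul' Y Z := by
    rw [fromBlocks_multiply]
    congr 1 <;> ext i j <;>
      simp [mul_apply, Finset.sum_add_distrib, Finset.sum_sub_distrib] <;> ring
  map_zero' := by simp
  map_add' Y Z := by
    rw [fromBlocks_add]
    congr 1
    ext
    simp [add_comm]
  commutes' r := by
    ext (i | i) (j | j) <;> by_cases h : i = j <;> simp [algebraMap_matrix_apply, h]
  map_star' Z := by
    rw [star_eq_conjTranspose, star_eq_conjTranspose, fromBlocks_conjTranspose]
    congr 1
    ext
    simp

lemma realification_apply (Z : Matrix n n ℂ) :
    realification n Z =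
      fromBlocks (Z.map Complex.re) (-Z.map Complex.im) (Z.map Complex.im) (Z.map Complex.re) :=
  rfl

lemma realification_injective : Function.Injective (realification n) := by
  intro Y Z hYZ
  rw [realification_apply, realification_apply] at hYZ
  obtain ⟨hre, -, him, -⟩ := fromBlocks_inj.1 hYZ
  ext i j
  exact Complex.ext (congrFun₂ hre i j) (congrFun₂ him i j)

lemma realification_diagonal_ofReal (d : n → ℝ) :
    realification n (diagonal (RCLike.ofReal ∘ d)) = diagonal (Sum.elim d d) := by
  rw [realification_apply, ← fromBlocks_diagonal]
  congr 1 <;> ext i j <;> by_cases h : i = j <;> simp [h]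

lemma commute_J_iff_mem_range_realification {A : Matrix (n ⊕ n) (n ⊕ n) ℝ} :
    Commute A (Matrix.J n ℝ) ↔ A ∈ Set.range (realification n) := by
  constructor
  · intro hA
    rw [← fromBlocks_toBlocks A, Matrix.J, commute_iff_eq, fromBlocks_multiply, fromBlocks_multiply,
      fromBlocks_inj] at hA
    obtain ⟨h₁₂, h₁₁, -, -⟩ := hA
    simp only [mul_zero, mul_one, zero_add, zero_mul, neg_mul, one_mul, mul_neg, add_zero, neg_inj]
      at h₁₂ h₁₁
    refine ⟨of fun i j => ⟨A.toBlocks₁₁ i j, A.toBlocks₂₁ i j⟩, ?_⟩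
    conv_rhs => rw [← fromBlocks_toBlocks A, h₁₂, ← h₁₁]
    rfl
  · rintro ⟨Z, rfl⟩
    simp [realification_apply, Matrix.J, commute_iff_eq, fromBlocks_multiply]

end Realification

section OrthogonalSymplectic

variable {n : Type*} [Fintype n] [DecidableEq n]

variable (n) in
/-- The orthogonal symplectic group `OSp(2n, ℝ) = Sp(2n, ℝ) ∩ O(2n)`, as a submonoid of the
matrices. -/
def orthogonalSymplecticGroup : Submonoid (Matrix (n ⊕ n) (n ⊕ n) ℝ) :=
  symplecticGroup n ℝ ⊓ orthogonalGroup (n ⊕ n) ℝ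

lemma transpose_mem_orthogonalSymplecticGroup {A : Matrix (n ⊕ n) (n ⊕ n) ℝ}
    (hA : A ∈ orthogonalSymplecticGroup n) : Aᵀ ∈ orthogonalSymplecticGroup n :=
  ⟨SymplecticGroup.transpose_mem hA.1, transpose_mem_unitaryGroup_iff.2 hA.2⟩

lemma mem_symplecticGroup_iff_commute_J {R : Type*} [CommRing R] {A : Matrix (n ⊕ n) (n ⊕ n) R}
    (hA : A ∈ orthogonalGroup (n ⊕ n) R) :
    A ∈ symplecticGroup n R ↔ Commute A (Matrix.J n R) := by
  rw [SymplecticGroup.mem_iff, commute_iff_eq]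
  have h₁ : A * Aᵀ = 1 := (mem_orthogonalGroup_iff (n ⊕ n) R).1 hA
  have h₂ : Aᵀ * A = 1 := (mem_orthogonalGroup_iff' (n ⊕ n) R).1 hA
  constructor
  · intro h
    calc A * Matrix.J n R = A * Matrix.J n R * Aᵀ * A := by rw [mul_assoc _ Aᵀ, h₂, mul_one]
      _ = Matrix.J n R * A := by rw [h]
  · intro h
    rw [h, mul_assoc, h₁, mul_one]

lemma map_realification_unitaryGroup :
    (unitaryGroup n ℂ).map (realification n) = orthogonalSymplecticGroup n := by
  have mem_iff (Z : Matrix n n ℂ) :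
      realification n Z ∈ orthogonalGroup (n ⊕ n) ℝ ↔ Z ∈ unitaryGroup n ℂ := by
    rw [mem_unitaryGroup_iff, mem_unitaryGroup_iff, ← map_star, ← map_mul,
      map_eq_one_iff _ realification_injective]
  ext A
  constructor
  · rintro ⟨Z, hZ, rfl⟩
    have hO := (mem_iff Z).2 hZ
    exact ⟨(mem_symplecticGroup_iff_commute_J hO).2
      (commute_J_iff_mem_range_realification.2 ⟨Z, rfl⟩), hO⟩
  · rintro ⟨hSp, hO⟩
    obtain ⟨Z, rfl⟩ := commute_J_iff_mem_range_realification.1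
      ((mem_symplecticGroup_iff_commute_J hO).1 hSp)
    exact ⟨Z, (mem_iff Z).1 hO, rfl⟩

end OrthogonalSymplectic

section HermitianInvolution

variable {𝕜 n : Type*} [RCLike 𝕜] [Fintype n] [DecidableEq n] {A : Matrix n n 𝕜}

lemma eigenvalues_eq_one_or_neg_one (hA : A.IsHermitian) (hinv : A * A = 1) (i : n) :
    hA.eigenvalues i = 1 ∨ hA.eigenvalues i = -1 := by
  rw [hA.spectral_theorem, ← map_mul, EmbeddingLike.map_eq_one_iff, diagonal_mul_diagonal,
    diagonal_eq_one] at hinv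
  have hi : (hA.eigenvalues i : 𝕜) * hA.eigenvalues i = 1 := congrFun hinv i
  exact mul_self_eq_one_iff.1 (by exact_mod_cast hi)

lemma exists_unitary_conj_diagonal_eigenvalues_comp (hA : A.IsHermitian) (σ : Equiv.Perm n) :
    ∃ V ∈ unitaryGroup n 𝕜, A = star V * diagonal (RCLike.ofReal ∘ hA.eigenvalues ∘ σ) * V := by
  let U : Matrix n n 𝕜 := (hA.eigenvectorUnitary : Matrix n n 𝕜)
  have hV : star ((star U).submatrix σ id) = U.submatrix id σ := by
    simp [star_eq_conjTranspose]
  have hD : diagonal (RCLike.ofReal ∘ hA.eigenvalues ∘ σ) =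
      (diagonal (RCLike.ofReal ∘ hA.eigenvalues) : Matrix n n 𝕜).submatrix σ σ := by
    rw [submatrix_diagonal_equiv, Function.comp_assoc]
  refine ⟨(star U).submatrix σ id, ?_, ?_⟩
  · rw [mem_unitaryGroup_iff', hV, submatrix_mul_equiv, submatrix_id_id]
    exact Unitary.coe_mul_star_self hA.eigenvectorUnitary
  · rw [hV, hD, submatrix_mul_equiv, submatrix_mul_equiv, submatrix_id_id]
    exact hA.spectral_theorem

lemma exists_perm_apply_iff_val_lt {k : ℕ} (p : Fin k → Prop) :
    ∃ m ≤ k, ∃ σ : Equiv.Perm (Fin k), ∀ j, p (σ j) ↔ (j : ℕ) < m := by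
  classical
  have hle : Fintype.card {i // p i} ≤ k := by
    simpa using Fintype.card_subtype_le p
  have hcard : Fintype.card {j : Fin k // (j : ℕ) < Fintype.card {i // p i}} =
      Fintype.card {i // p i} := by
    rw [Fintype.card_subtype, Fin.card_filter_val_lt, min_eq_right hle]
  let e := Fintype.equivOfCardEq hcard
  exact ⟨_, hle, e.extendSubtype, fun j =>
    ⟨fun hj => by_contra fun hlt => e.extendSubtype_not_mem j hlt hj, e.extendSubtype_mem j⟩⟩

lemma exists_unitary_conj_diagonal_sign {k : ℕ} {A : Matrix (Fin k) (Fin k) 𝕜}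
    (hA : A.IsHermitian) (hinv : A * A = 1) :
    ∃ m ≤ k, ∃ V ∈ unitaryGroup (Fin k) 𝕜,
      A = star V *
        diagonal (RCLike.ofReal ∘ fun j : Fin k => if (j : ℕ) < m then (-1 : ℝ) else 1) * V := by
  obtain ⟨m, hm, σ, hσ⟩ := exists_perm_apply_iff_val_lt fun i => hA.eigenvalues i = -1
  have hsorted : hA.eigenvalues ∘ σ = fun j : Fin k => if (j : ℕ) < m then (-1 : ℝ) else 1 := by
    ext j
    split_ifs with hj
    · exact (hσ j).2 hj
    · exact (eigenvalues_eq_one_or_neg_one hA hinv (σ j)).resolve_right (mt (hσ j).1 hj)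
  exact ⟨m, hm, hsorted ▸ exists_unitary_conj_diagonal_eigenvalues_comp hA σ⟩

end HermitianInvolution

lemma mem_orthogonalSymplecticGroup_iff {N : ℕ} {A : Matrix (Fin N ⊕ Fin N) (Fin N ⊕ Fin N) ℝ} :
    A ∈ orthogonalSymplecticGroup (Fin N) ↔ Aᵀ * J N * A = J N ∧ Aᵀ * A = 1 := by
  have hJ : _root_.J N = -Matrix.J (Fin N) ℝ := by
    simp [_root_.J, Matrix.J, fromBlocks_neg]
  rw [hJ, mul_neg, neg_mul, neg_inj]
  exact and_congr SymplecticGroup.mem_iff' (mem_orthogonalGroup_iff' (Fin N ⊕ Fin N) ℝ)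

lemma exists_orthogonalSymplectic_conj_Dm {N : ℕ} {T : Matrix (Fin N ⊕ Fin N) (Fin N ⊕ Fin N) ℝ}
    (hT : T ∈ orthogonalSymplecticGroup (Fin N)) (hsymm : T.IsSymm) :
    ∃ m ≤ N, ∃ R ∈ orthogonalSymplecticGroup (Fin N), T = Rᵀ * Dm N m * R := by
  rw [← map_realification_unitaryGroup] at hT ⊢
  obtain ⟨H, hH, rfl⟩ := hT
  have hherm : star H = H :=
    realification_injective ((map_star (realification (Fin N)) H).trans hsymm)
  have hinv : H * H = 1 := by
    simpa only [hherm] using mem_unitaryGroup_iff.1 hH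
  obtain ⟨m, hm, V, hV, hdiag⟩ := exists_unitary_conj_diagonal_sign hherm hinv
  refine ⟨m, hm, realification (Fin N) V, ⟨V, hV, rfl⟩, ?_⟩
  calc realification (Fin N) H
      = star (realification (Fin N) V) * Dm N m * realification (Fin N) V := by
        rw [Dm, ← realification_diagonal_ofReal, ← map_star, ← map_mul, ← map_mul, ← hdiag]
    _ = (realification (Fin N) V)ᵀ * Dm N m * realification (Fin N) V := rfl

/-- Critical points of the cost on the orthogonal symplectic group: if
`W, S ∈ OSp(2N,ℝ)` satisfy `WᵀS = SᵀW`, then `S = W·Rᵀ·D_m·R` for some `0 ≤ m ≤ N`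
and some `R ∈ OSp(2N,ℝ)`. -/
theorem stmt_17 (N : ℕ) (W S : Matrix (Fin N ⊕ Fin N) (Fin N ⊕ Fin N) ℝ)
    (hWsymp : Wᵀ * J N * W = J N) (hWorth : Wᵀ * W = 1)
    (hSsymp : Sᵀ * J N * S = J N) (hSorth : Sᵀ * S = 1)
    (hcrit : Wᵀ * S = Sᵀ * W) :
    ∃ (m : ℕ) (R : Matrix (Fin N ⊕ Fin N) (Fin N ⊕ Fin N) ℝ),
      m ≤ N ∧ Rᵀ * J N * R = J N ∧ Rᵀ * R = 1 ∧
      S = W * Rᵀ * Dm N m * R := by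
  have hW := mem_orthogonalSymplecticGroup_iff.2 ⟨hWsymp, hWorth⟩
  have hS := mem_orthogonalSymplecticGroup_iff.2 ⟨hSsymp, hSorth⟩
  have hsymm : (Wᵀ * S).IsSymm := by
    rw [IsSymm, transpose_mul, transpose_transpose, hcrit]
  obtain ⟨m, hm, R, hR, hT⟩ := exists_orthogonalSymplectic_conj_Dm
    (mul_mem (transpose_mem_orthogonalSymplecticGroup hW) hS) hsymm
  obtain ⟨hRsymp, hRorth⟩ := mem_orthogonalSymplecticGroup_iff.1 hR
  refine ⟨m, R, hm, hRsymp, hRorth, ?_⟩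
  calc S = W * (Wᵀ * S) := by rw [← mul_assoc, mul_eq_one_comm.1 hWorth, one_mul]
    _ = W * Rᵀ * Dm N m * R := by rw [hT]; simp only [mul_assoc]
end
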